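/- Let k be odd and let G=(V,E) be a k-uniform hyperstar of size d>0 with Laplacian tensor L. Then λ(L) = d. -/

import Mathlib

open Finset

variable {α : Type*} [DecidableEq α]

/-- The degree of a vertex `i`: the number of edges containing `i`. -/
def hdeg (E : Finset (Finset α)) (i : α) : ℕ := (E.filter (fun e => i ∈ e)).card

/-- The action of the Laplacian tensor: `(L x^{k-1})_i`. -/
def lapAct (k : ℕ) (E : Finset (Finset α)) (x : α → ℝ) (i : α) : ℝ :=
  (hdeg E i : ℝ) * x i ^ (k - 1) - ∑ e ∈ E.filter (fun e => i ∈ e), ∏ j ∈ e.erase i, x j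

/-- The action of the signless Laplacian tensor: `(Q x^{k-1})_i`. -/
def signAct (k : ℕ) (E : Finset (Finset α)) (x : α → ℝ) (i : α) : ℝ :=
  (hdeg E i : ℝ) * x i ^ (k - 1) + ∑ e ∈ E.filter (fun e => i ∈ e), ∏ j ∈ e.erase i, x j

/-- The action of the adjacency tensor: `(A x^{k-1})_i`. -/
def adjAct (E : Finset (Finset α)) (x : α → ℝ) (i : α) : ℝ :=
  ∑ e ∈ E.filter (fun e => i ∈ e), ∏ j ∈ e.erase i, x j

/-- `lam` is an H-eigenvalue of the Laplacian tensor. -/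
def IsLapEig (k : ℕ) (E : Finset (Finset α)) (lam : ℝ) : Prop :=
  ∃ x : α → ℝ, x ≠ 0 ∧ ∀ i, lapAct k E x i = lam * x i ^ (k - 1)

/-- `lam` is the largest H-eigenvalue of the Laplacian tensor. -/
def IsLargestLapEig (k : ℕ) (E : Finset (Finset α)) (lam : ℝ) : Prop :=
  IsLapEig k E lam ∧ ∀ mu : ℝ, IsLapEig k E mu → mu ≤ lam

/-- `lam` is an H-eigenvalue of the signless Laplacian tensor. -/
def IsSignEig (k : ℕ) (E : Finset (Finset α)) (lam : ℝ) : Prop :=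
  ∃ x : α → ℝ, x ≠ 0 ∧ ∀ i, signAct k E x i = lam * x i ^ (k - 1)

/-- `lam` is the largest H-eigenvalue of the signless Laplacian tensor. -/
def IsLargestSignEig (k : ℕ) (E : Finset (Finset α)) (lam : ℝ) : Prop :=
  IsSignEig k E lam ∧ ∀ mu : ℝ, IsSignEig k E mu → mu ≤ lam

/-- `lam` is an H-eigenvalue of the adjacency tensor. -/
def IsAdjEig (k : ℕ) (E : Finset (Finset α)) (lam : ℝ) : Prop :=
  ∃ x : α → ℝ, x ≠ 0 ∧ ∀ i, adjAct E x i = lam * x i ^ (k - 1)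

/-- `lam` is the largest H-eigenvalue of the adjacency tensor. -/
def IsLargestAdjEig (k : ℕ) (E : Finset (Finset α)) (lam : ℝ) : Prop :=
  IsAdjEig k E lam ∧ ∀ mu : ℝ, IsAdjEig k E mu → mu ≤ lam

/-- `G = (V, E)` is a `k`-uniform hyperstar of size `d`: there is a heart `h` and a
disjoint partition of the remaining vertices into `d` parts of size `k-1`, the edges
being the heart together with one part. -/
def IsHyperstar (k d : ℕ) (E : Finset (Finset α)) : Prop :=
  ∃ (h : α) (P : Fin d → Finset α),
    (∀ i, h ∉ P i) ∧
    (∀ i, (P i).card = k - 1) ∧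
    (∀ i j, i ≠ j → Disjoint (P i) (P j)) ∧
    (∀ v : α, v ≠ h → ∃ i, v ∈ P i) ∧
    E = Finset.image (fun i => insert h (P i)) Finset.univ

/-- The hypergraph is connected: any two distinct vertices are joined by a chain of
pairwise intersecting edges. -/
def IsConnectedH (E : Finset (Finset α)) : Prop :=
  ∀ i j : α, i ≠ j → Relation.TransGen (fun a b : α => ∃ e ∈ E, a ∈ e ∧ b ∈ e) i j

/-- For `k` even: the hypergraph is odd-bipartite. -/
def IsOddBipartite [Fintype α] (E : Finset (Finset α)) : Prop :=
  E = ∅ ∨ ∃ V₁ : Finset α, V₁ ≠ ∅ ∧ V₁ ≠ Finset.univ ∧ ∀ e ∈ E, Odd (e ∩ V₁).card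

/-- `G = (V, E)` is a `k`-uniform hypercycle of size `s`. -/
def IsHypercycle (k : ℕ) (s : ℕ) [NeZero s] (E : Finset (Finset α)) : Prop :=
  ∃ P : Fin s → Finset α,
    (∀ i, (P i).card = k) ∧
    (∀ v : α, ∃ i, v ∈ P i) ∧
    E = Finset.image P Finset.univ ∧
    (∀ i : Fin s, (P i ∩ P (i + 1)).card = 1) ∧
    (∀ i j : Fin s, i ≠ j → j ≠ i + 1 → i ≠ j + 1 → P i ∩ P j = ∅) ∧
    Function.Injective (fun i : Fin s => P i ∩ P (i + 1))

/-!
If `(mu, x)` is an eigenpair with `mu ≠ 1`, multiplying the equation at a degree-one vertex `v` of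
an edge `e` by `x v` gives `(1 - mu) * x v ^ k = ∏ j ∈ e, x j`, whose right-hand side does not
depend on `v`. For odd `k`, `x` is therefore constant on the degree-one vertices of `e`, so on a
hyperstar each edge contributes an even power `∏ j ∈ e.erase h, x j ≥ 0` to the equation at the
heart `h`. If `mu > d`, that equation forces `x h = 0`, and then the equations at the other
vertices force `x = 0`. Conversely, the indicator vector of any vertex is an eigenvector whose
eigenvalue is the degree of that vertex, since an edge of size at least three has a third vertex.
-/

variable {k d : ℕ} {E : Finset (Finset α)} {e : Finset α} {h v : α} {x : α → ℝ} {mu : ℝ}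

lemma IsLargestLapEig.unique {lam : ℝ} (hlam : IsLargestLapEig k E lam)
    (hmu : IsLargestLapEig k E mu) : lam = mu :=
  le_antisymm (hmu.2 lam hlam.1) (hlam.2 mu hmu.1)

lemma filter_mem_eq_singleton_of_hdeg_eq_one (hdeg_v : hdeg E v = 1) (he : e ∈ E) (hve : v ∈ e) :
    E.filter (fun e ↦ v ∈ e) = {e} := by
  obtain ⟨f, hf⟩ := card_eq_one.1 hdeg_v
  have hef : e ∈ ({f} : Finset (Finset α)) := hf ▸ mem_filter.2 ⟨he, hve⟩
  rw [hf, mem_singleton.1 hef]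

lemma lapAct_of_hdeg_eq_one (hdeg_v : hdeg E v = 1) (he : e ∈ E) (hve : v ∈ e) :
    lapAct k E x v = x v ^ (k - 1) - ∏ j ∈ e.erase v, x j := by
  rw [lapAct, hdeg_v, filter_mem_eq_singleton_of_hdeg_eq_one hdeg_v he hve, sum_singleton,
    Nat.cast_one, one_mul]

lemma one_sub_mul_pow_eq_prod_of_hdeg_eq_one (hk : k ≠ 0) (hdeg_v : hdeg E v = 1) (he : e ∈ E)
    (hve : v ∈ e) (hx : lapAct k E x v = mu * x v ^ (k - 1)) :
    (1 - mu) * x v ^ k = ∏ j ∈ e, x j := by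
  rw [lapAct_of_hdeg_eq_one hdeg_v he hve] at hx
  rw [← mul_prod_erase e x hve, ← mul_pow_sub_one hk (x v)]
  linear_combination x v * hx

lemma prod_erase_nonneg_of_hdeg_eq_one (hk : Odd k) (hmu : mu ≠ 1) (he : e ∈ E) (hcard : #e = k)
    (hhe : h ∈ e) (hdeg_one : ∀ v ∈ e.erase h, hdeg E v = 1)
    (hx : ∀ v ∈ e.erase h, lapAct k E x v = mu * x v ^ (k - 1)) :
    0 ≤ ∏ j ∈ e.erase h, x j := by
  obtain hempty | ⟨w, hw⟩ := (e.erase h).eq_empty_or_nonempty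
  · simp [hempty]
  have pow_eq (v) (hv : v ∈ e.erase h) : (1 - mu) * x v ^ k = ∏ j ∈ e, x j :=
    one_sub_mul_pow_eq_prod_of_hdeg_eq_one hk.pos.ne' (hdeg_one v hv) he (mem_of_mem_erase hv)
      (hx v hv)
  have const (v) (hv : v ∈ e.erase h) : x v = x w :=
    hk.pow_injective <| mul_left_cancel₀ (sub_ne_zero.2 hmu.symm) <|
      (pow_eq v hv).trans (pow_eq w hw).symm
  rw [prod_eq_pow_card const, card_erase_of_mem hhe, hcard]
  exact (Nat.Odd.sub_odd hk odd_one).pow_nonneg _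

lemma lapAct_single (hE : ∀ e ∈ E, 2 < #e) (i v : α) :
    lapAct k E (Pi.single i 1) v = hdeg E v * (Pi.single i 1 : α → ℝ) v ^ (k - 1) := by
  refine sub_eq_self.2 <| sum_eq_zero fun e he ↦ ?_
  obtain ⟨w, hwe, hw⟩ : ∃ w ∈ e, w ∉ ({v, i} : Finset α) :=
    exists_mem_notMem_of_card_lt_card <| card_le_two.trans_lt <| hE e (mem_filter.1 he).1
  rw [mem_insert, mem_singleton, not_or] at hw
  exact prod_eq_zero (mem_erase.2 ⟨hw.1, hwe⟩) (Pi.single_eq_of_ne hw.2 _)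

lemma isLapEig_hdeg (hk : 1 < k) (hE : ∀ e ∈ E, 2 < #e) (i : α) :
    IsLapEig k E (hdeg E i) := by
  refine ⟨Pi.single i 1, by simp, fun v ↦ ?_⟩
  rw [lapAct_single hE]
  obtain rfl | hvi := eq_or_ne v i
  · rfl
  · rw [Pi.single_eq_of_ne hvi, zero_pow (by lia), mul_zero, mul_zero]

/-- A vertex `h` is a heart of the hypergraph `E` if it lies in every edge and all other vertices
have degree one. For uniform hypergraphs this captures hyperstars without choosing an indexing of
the edges. -/
structure IsHeart (E : Finset (Finset α)) (h : α) : Prop where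
  mem : ∀ e ∈ E, h ∈ e
  hdeg_eq_one : ∀ v, v ≠ h → hdeg E v = 1

namespace IsHeart

lemma hdeg_eq_card (hh : IsHeart E h) : hdeg E h = #E := by
  rw [hdeg, filter_true_of_mem hh.mem]

lemma exists_mem (hh : IsHeart E h) (hvh : v ≠ h) : ∃ e ∈ E, v ∈ e := by
  have hpos : 0 < hdeg E v := (hh.hdeg_eq_one v hvh).symm ▸ one_pos
  obtain ⟨e, he⟩ := card_pos.1 hpos
  exact ⟨e, mem_filter.1 he⟩

lemma lapAct_eq (hh : IsHeart E h) :
    lapAct k E x h = #E * x h ^ (k - 1) - ∑ e ∈ E, ∏ j ∈ e.erase h, x j := by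
  rw [lapAct, hh.hdeg_eq_card, filter_true_of_mem hh.mem]

lemma eq_zero_of_card_lt (hh : IsHeart E h) (hk : Odd k) (hE : (E : Set (Finset α)).Sized k)
    (hx : ∀ v, lapAct k E x v = mu * x v ^ (k - 1)) (hmu : #E < mu) : x = 0 := by
  have one_lt (e) (he : e ∈ E) : 1 < mu :=
    (Nat.one_le_cast.2 <| card_pos.2 ⟨e, he⟩).trans_lt hmu
  have heart_eq_zero : x h = 0 := by
    have sum_prod_nonneg : 0 ≤ ∑ e ∈ E, ∏ j ∈ e.erase h, x j := sum_nonneg fun e he ↦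
      prod_erase_nonneg_of_hdeg_eq_one hk (one_lt e he).ne' he (hE he) (hh.mem e he)
        (fun v hv ↦ hh.hdeg_eq_one v (ne_of_mem_erase hv)) fun v _ ↦ hx v
    have heart_eq : (mu - #E) * x h ^ (k - 1) = -∑ e ∈ E, ∏ j ∈ e.erase h, x j := by
      linear_combination (hx h).symm.trans hh.lapAct_eq
    have pow_nonpos : x h ^ (k - 1) ≤ 0 := by
      refine nonpos_of_mul_nonpos_right ?_ (sub_pos.2 hmu)
      rw [heart_eq]
      exact neg_nonpos.2 sum_prod_nonneg
    exact eq_zero_of_pow_eq_zero <| pow_nonpos.antisymm <| (Nat.Odd.sub_odd hk odd_one).pow_nonneg _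
  funext v
  obtain rfl | hvh := eq_or_ne v h
  · exact heart_eq_zero
  obtain ⟨e, he, hve⟩ := hh.exists_mem hvh
  have pow_eq := one_sub_mul_pow_eq_prod_of_hdeg_eq_one hk.pos.ne' (hh.hdeg_eq_one v hvh) he hve
    (hx v)
  rw [prod_eq_zero (hh.mem e he) heart_eq_zero] at pow_eq
  exact eq_zero_of_pow_eq_zero <|
    (mul_eq_zero.1 pow_eq).resolve_left (sub_ne_zero.2 (one_lt e he).ne)

theorem isLargestLapEig_card (hh : IsHeart E h) (hk : 3 ≤ k) (hk_odd : Odd k)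
    (hE : (E : Set (Finset α)).Sized k) : IsLargestLapEig k E #E := by
  have two_lt_card (e) (he : e ∈ E) : 2 < #e := (hE he).symm ▸ hk
  refine ⟨hh.hdeg_eq_card ▸ isLapEig_hdeg (by lia) two_lt_card h, ?_⟩
  rintro mu ⟨x, hx_ne, hx⟩
  exact not_lt.1 fun hmu ↦ hx_ne <| hh.eq_zero_of_card_lt hk_odd hE hx hmu

end IsHeart

namespace IsHyperstar

lemma sized (hstar : IsHyperstar k d E) (hk : k ≠ 0) : (E : Set (Finset α)).Sized k := by
  obtain ⟨h, P, hP, hcard, -, -, rfl⟩ := hstar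
  intro e he
  obtain ⟨i, -, rfl⟩ := mem_image.1 he
  rw [card_insert_of_notMem (hP i), hcard, Nat.sub_one_add_one hk]

lemma card_eq (hstar : IsHyperstar k d E) (hk : 1 < k) : #E = d := by
  obtain ⟨h, P, hP, hcard, hdisj, -, rfl⟩ := hstar
  have insert_injective : Function.Injective fun i ↦ insert h (P i) := by
    intro i j (hij : insert h (P i) = insert h (P j))
    by_contra hne
    obtain ⟨v, hv⟩ : (P i).Nonempty := card_pos.1 (by rw [hcard]; lia)
    have hvj : v ∈ insert h (P j) := hij ▸ mem_insert_of_mem hv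
    exact disjoint_left.1 (hdisj i j hne) hv <|
      mem_of_mem_insert_of_ne hvj (ne_of_mem_of_not_mem hv (hP i))
  rw [card_image_of_injective _ insert_injective, card_univ, Fintype.card_fin]

lemma exists_isHeart (hstar : IsHyperstar k d E) : ∃ h, IsHeart E h := by
  obtain ⟨h, P, -, -, hdisj, hcover, rfl⟩ := hstar
  refine ⟨h, ⟨by simp, fun v hvh ↦ card_eq_one.2 ?_⟩⟩
  obtain ⟨i, hi⟩ := hcover v hvh
  refine ⟨insert h (P i), eq_singleton_iff_unique_mem.2 ⟨by simp [hi], fun e he ↦ ?_⟩⟩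
  obtain ⟨he, hve⟩ := mem_filter.1 he
  obtain ⟨j, -, rfl⟩ := mem_image.1 he
  have hij : i = j := by
    by_contra hne
    exact disjoint_left.1 (hdisj i j hne) hi (mem_of_mem_insert_of_ne hve hvh)
  rw [hij]

end IsHyperstar

theorem largest_lap_eig_hyperstar_odd_general (hk : 3 ≤ k) (hk_odd : Odd k)
    (hstar : IsHyperstar k d E) : IsLargestLapEig k E d := by
  obtain ⟨h, hh⟩ := hstar.exists_isHeart
  rw [← hstar.card_eq (by lia)]
  exact hh.isLargestLapEig_card hk hk_odd (hstar.sized (by lia))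

/-- For `k` odd and a `k`-uniform hyperstar of size `d > 0` with Laplacian
tensor `L`, we have `λ(L) = d`. -/
theorem largest_lap_eig_hyperstar_odd {n k d : ℕ} (hk : 3 ≤ k) (hkn : k ≤ n)
    (hkodd : Odd k) (hd : 0 < d) (E : Finset (Finset (Fin n)))
    (hstar : IsHyperstar k d E) (lam : ℝ) (hlam : IsLargestLapEig k E lam) :
    lam = (d : ℝ) := by
  exact hlam.unique (largest_lap_eig_hyperstar_odd_general hk hkodd hstar)
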